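/- arXiv:1401.6260 — 6 statements merged into one kernel-verified Lean document; each statement's English description precedes it below -/
import Mathlib

section
/- Suppose the protocol sequence set s_1, …, s_K is TI with MPR capability γ, where 1 ≤ γ < K. Then for every user i and all shifts (τ_1,…,τ_K), the throughput satisfies R_i(τ_1,…,τ_K) = f_i · Σ_{H ⊆ {1,…,K}∖{i}, |H| ≤ γ−1} ( ∏_{j ∈ H} f_j ) · ( ∏_{k ∈ {1,…,K}∖(H∪{i})} (1 − f_k) ), as an identity of rational numbers, where f_1,…,f_K are the duty factors. -/
open Finset

/-- Generalized Hamming cross-correlation of the sequences indexed by `A`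
(only the shifts `τ j` with `j ∈ A` matter). -/
def Hcorr {K L : ℕ} [NeZero L] (s : Fin K → ZMod L → ℕ)
    (A : Finset (Fin K)) (τ : Fin K → ZMod L) : ℕ :=
  ∑ t : ZMod L, ∏ j ∈ A, s j (t + τ j)

/-- The family `s` is shift-invariant (SI): every generalized Hamming
cross-correlation is independent of the relative shifts. -/
def IsSI {K L : ℕ} [NeZero L] (s : Fin K → ZMod L → ℕ) : Prop :=
  ∀ A : Finset (Fin K), A.Nonempty →
    ∀ τ τ' : Fin K → ZMod L, Hcorr s A τ = Hcorr s A τ'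

/-- Number of slots `t` in one period where user `i` transmits and at most
`γ - 1` other users transmit. -/
def Rcount {K L : ℕ} [NeZero L] (s : Fin K → ZMod L → ℕ) (γ : ℕ)
    (i : Fin K) (τ : Fin K → ZMod L) : ℕ :=
  (Finset.univ.filter (fun t : ZMod L =>
    s i (t + τ i) = 1 ∧ ∑ j ∈ Finset.univ.erase i, s j (t + τ j) ≤ γ - 1)).card

/-- Throughput of user `i` under MPR capability `γ` at shifts `τ`. -/
def R {K L : ℕ} [NeZero L] (s : Fin K → ZMod L → ℕ) (γ : ℕ)
    (i : Fin K) (τ : Fin K → ZMod L) : ℚ :=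
  (Rcount s γ i τ : ℚ) / L

/-- The family `s` is throughput-invariant (TI) with MPR capability `γ`. -/
def IsTI {K L : ℕ} [NeZero L] (s : Fin K → ZMod L → ℕ) (γ : ℕ) : Prop :=
  ∀ i : Fin K, ∀ τ τ' : Fin K → ZMod L, R s γ i τ = R s γ i τ'

/-- Duty factor of a single sequence. -/
def duty {L : ℕ} [NeZero L] (s : ZMod L → ℕ) : ℚ :=
  (∑ t : ZMod L, (s t : ℚ)) / L

/-!
Averaging over all shift vectors makes the slots of the users independent: for each fixed slot `t`,
the vector `(t + τ_j)_j` is uniformly distributed when `τ` is. Hence the mean over all shifts of the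
fraction of slots in which exactly the users in `A` transmit is the probability of `A` for
independent coin tosses whose biases are the duty factors. A throughput that does not depend on the
shifts equals its mean.
-/

open scoped BigOperators

section ActiveSet

variable {ι : Type*} [Fintype ι] [DecidableEq ι] {𝕜 : Type*}

/-- The set of users that transmit when user `j` emits the symbol `b j`. -/
def activeSet (b : ι → ℕ) : Finset ι := {j | b j = 1}

/-- The probability that exactly the users in `A` transmit when each user `j` independently
transmits with probability `p j`. It is encoded as a single product over all users, so that it is
visibly affine in each `p j`. -/
def activeSetProb [CommRing 𝕜] (p : ι → 𝕜) (A : Finset ι) : 𝕜 :=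
  ∏ j, if j ∈ A then p j else 1 - p j

theorem activeSetProb_ite_mem [CommRing 𝕜] (B A : Finset ι) :
    activeSetProb (fun j => if j ∈ B then (1 : 𝕜) else 0) A = if B = A then 1 else 0 := by
  have hfactor (j : ι) :
      (if j ∈ A then (if j ∈ B then (1 : 𝕜) else 0) else 1 - if j ∈ B then 1 else 0)
        = if j ∈ B ↔ j ∈ A then 1 else 0 := by
    by_cases hA : j ∈ A <;> by_cases hB : j ∈ B <;> simp [hA, hB]
  simp only [activeSetProb, hfactor, Fintype.prod_boole, Finset.ext_iff]

theorem activeSetProb_insert [CommRing 𝕜] (p : ι → 𝕜) {i : ι} {H : Finset ι}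
    (hH : H ⊆ univ.erase i) :
    activeSetProb p (insert i H)
      = p i * ((∏ j ∈ H, p j) * ∏ k ∈ univ.erase i \ H, (1 - p k)) := by
  have hi : i ∉ H := fun h => notMem_erase i univ (hH h)
  have hcompl : univ.erase i \ H = (insert i H)ᶜ := by
    ext k
    simp
  rw [activeSetProb, ← prod_mul_prod_compl (insert i H), hcompl, ← mul_assoc, ← prod_insert hi]
  congr 1
  · exact prod_congr rfl fun j hj => if_pos hj
  · exact prod_congr rfl fun j hj => if_neg (mem_compl.mp hj)

/-- The transmitting sets for which user `i` transmits together with at most `m` others. -/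
def receptionSets (i : ι) (m : ℕ) : Finset (Finset ι) :=
  {A | i ∈ A ∧ #(A.erase i) ≤ m}

theorem sum_receptionSets {M : Type*} [AddCommMonoid M] (i : ι) (m : ℕ) (f : Finset ι → M) :
    ∑ A ∈ receptionSets i m, f A
      = ∑ H ∈ (univ.erase i).powerset with #H ≤ m, f (insert i H) := by
  refine sum_nbij' (fun A => A.erase i) (fun H => insert i H) ?_ ?_ ?_ ?_ ?_
  · intro A hA
    simp only [receptionSets, mem_filter_univ] at hA
    exact mem_filter.mpr ⟨mem_powerset.mpr (erase_subset_erase i (subset_univ A)), hA.2⟩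
  · intro H hH
    have hi : i ∉ H := fun h => by simpa using mem_powerset.mp (mem_filter.mp hH).1 h
    simpa [receptionSets, hi] using (mem_filter.mp hH).2
  · intro A hA
    exact insert_erase (mem_filter.mp hA).2.1
  · intro H hH
    exact erase_insert fun h => by simpa using mem_powerset.mp (mem_filter.mp hH).1 h
  · intro A hA
    rw [insert_erase (mem_filter.mp hA).2.1]

theorem natCast_eq_ite_mem_activeSet [AddMonoidWithOne 𝕜] {b : ι → ℕ}
    (hb : ∀ j, b j = 0 ∨ b j = 1) (j : ι) :
    (b j : 𝕜) = if j ∈ activeSet b then 1 else 0 := by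
  rcases hb j with h | h <;> simp [activeSet, h]

theorem ite_activeSet_mem_eq_sum [CommRing 𝕜] {b : ι → ℕ} (hb : ∀ j, b j = 0 ∨ b j = 1)
    (𝒜 : Finset (Finset ι)) :
    (if activeSet b ∈ 𝒜 then (1 : 𝕜) else 0) = ∑ A ∈ 𝒜, activeSetProb (fun j => (b j : 𝕜)) A := by
  simp only [natCast_eq_ite_mem_activeSet hb, activeSetProb_ite_mem, sum_ite_eq]

theorem activeSet_mem_receptionSets {b : ι → ℕ} (hb : ∀ j, b j = 0 ∨ b j = 1) (i : ι) (m : ℕ) :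
    activeSet b ∈ receptionSets i m ↔ b i = 1 ∧ ∑ j ∈ univ.erase i, b j ≤ m := by
  have hsum : ∑ j ∈ univ.erase i, b j = #((activeSet b).erase i) := by
    calc ∑ j ∈ univ.erase i, b j
        = ∑ j ∈ univ.erase i, if j ∈ activeSet b then 1 else 0 :=
          sum_congr rfl fun j _ => natCast_eq_ite_mem_activeSet hb j
      _ = #((univ.erase i).filter (· ∈ activeSet b)) := (card_filter _ _).symm
      _ = #((activeSet b).erase i) := by
          congr 1
          ext j
          simp
  simp [receptionSets, hsum, activeSet]

end ActiveSet

section Average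

variable {ι : Type*} [Fintype ι] [DecidableEq ι] {𝕜 : Type*}

theorem expect_pi_prod [CommSemiring 𝕜] [Algebra ℚ≥0 𝕜] {Ω : ι → Type*} [∀ j, Fintype (Ω j)]
    (f : ∀ j, Ω j → 𝕜) :
    𝔼 x : ∀ j, Ω j, ∏ j, f j (x j) = ∏ j, 𝔼 y, f j y := by
  simp only [expect_univ, ← Fintype.prod_sum, Algebra.smul_def, prod_mul_distrib,
    Fintype.card_pi, Nat.cast_prod, ← prod_inv_distrib, map_prod]

theorem expect_activeSetProb [CommRing 𝕜] [Algebra ℚ≥0 𝕜] {Ω : ι → Type*} [∀ j, Fintype (Ω j)]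
    [∀ j, Nonempty (Ω j)] (f : ∀ j, Ω j → 𝕜) (A : Finset ι) :
    𝔼 x : ∀ j, Ω j, activeSetProb (fun j => f j (x j)) A
      = activeSetProb (fun j => 𝔼 y, f j y) A := by
  simp only [activeSetProb]
  rw [expect_pi_prod fun j y => if j ∈ A then f j y else 1 - f j y]
  refine prod_congr rfl fun j _ => ?_
  split_ifs
  · rfl
  · rw [expect_sub_distrib, Fintype.expect_const]

theorem expect_expect_add {G M : Type*} [AddGroup G] [Fintype G] [AddCommMonoid M] [Module ℚ≥0 M]
    (F : (ι → G) → M) :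
    𝔼 τ : ι → G, 𝔼 t : G, F (fun j => t + τ j) = 𝔼 x, F x := by
  have htranslate (t : G) : 𝔼 τ : ι → G, F (fun j => t + τ j) = 𝔼 x, F x :=
    Fintype.expect_equiv (Equiv.addLeft fun _ => t) _ _ fun _ => rfl
  simp only [expect_comm univ univ, htranslate, Fintype.expect_const]

theorem dens_filter_eq_expect {α : Type*} [Fintype α] [Semifield 𝕜] [CharZero 𝕜] (P : α → Prop)
    [DecidablePred P] :
    ((univ.filter P).dens : 𝕜) = 𝔼 a, if P a then 1 else 0 := by
  rw [nnratCast_dens, Fintype.expect_eq_sum_div_card, sum_boole]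

theorem expect_dens_activeSet_mem [Field 𝕜] [CharZero 𝕜] {G : Type*} [AddGroup G] [Fintype G]
    {s : ι → G → ℕ} (hs : ∀ j x, s j x = 0 ∨ s j x = 1) (𝒜 : Finset (Finset ι)) :
    𝔼 τ : ι → G, (dens {t | activeSet (fun j => s j (t + τ j)) ∈ 𝒜} : 𝕜)
      = ∑ A ∈ 𝒜, activeSetProb (fun j => 𝔼 t, (s j t : 𝕜)) A := by
  calc 𝔼 τ : ι → G, (dens {t | activeSet (fun j => s j (t + τ j)) ∈ 𝒜} : 𝕜)
      = 𝔼 τ : ι → G, 𝔼 t, ∑ A ∈ 𝒜, activeSetProb (fun j => (s j (t + τ j) : 𝕜)) A := by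
        simp only [dens_filter_eq_expect, ite_activeSet_mem_eq_sum fun j => hs j _]
    _ = 𝔼 x : ι → G, ∑ A ∈ 𝒜, activeSetProb (fun j => (s j (x j) : 𝕜)) A :=
        expect_expect_add fun x => ∑ A ∈ 𝒜, activeSetProb (fun j => (s j (x j) : 𝕜)) A
    _ = ∑ A ∈ 𝒜, activeSetProb (fun j => 𝔼 t, (s j t : 𝕜)) A := by
        rw [expect_sum_comm]
        exact sum_congr rfl fun A _ => expect_activeSetProb (fun j y => (s j y : 𝕜)) A

end Average

section Throughput

variable {ι G : Type*} [Fintype ι] [DecidableEq ι] [AddGroup G] [Fintype G]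

/-- The throughput of user `i` at shifts `τ` for sequences on an arbitrary finite group of slots.
The parameter `m` is the number of other simultaneous transmissions that reception tolerates, so
`m = γ - 1` for MPR capability `γ`. -/
def throughput (s : ι → G → ℕ) (m : ℕ) (i : ι) (τ : ι → G) : ℚ :=
  (dens {t | s i (t + τ i) = 1 ∧ ∑ j ∈ univ.erase i, s j (t + τ j) ≤ m} : ℚ)

theorem throughput_eq_dens {s : ι → G → ℕ} (hs : ∀ j x, s j x = 0 ∨ s j x = 1) (m : ℕ) (i : ι)
    (τ : ι → G) :
    throughput s m i τ = dens {t | activeSet (fun j => s j (t + τ j)) ∈ receptionSets i m} := by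
  simp only [throughput, activeSet_mem_receptionSets fun j => hs j _]

theorem expect_throughput {s : ι → G → ℕ} (hs : ∀ j x, s j x = 0 ∨ s j x = 1) (i : ι) (m : ℕ) :
    𝔼 τ, throughput s m i τ
      = (𝔼 t, (s i t : ℚ)) * ∑ H ∈ (univ.erase i).powerset with #H ≤ m,
          (∏ j ∈ H, 𝔼 t, (s j t : ℚ)) * ∏ k ∈ univ.erase i \ H, (1 - 𝔼 t, (s k t : ℚ)) := by
  calc 𝔼 τ, throughput s m i τ
      = ∑ A ∈ receptionSets i m, activeSetProb (fun j => 𝔼 t, (s j t : ℚ)) A := by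
        simp only [throughput_eq_dens hs, expect_dens_activeSet_mem hs]
    _ = _ := by
        rw [sum_receptionSets, mul_sum]
        exact sum_congr rfl fun H hH =>
          activeSetProb_insert _ (mem_powerset.mp (mem_filter.mp hH).1)

theorem stmt1_general {s : ι → G → ℕ} (hs : ∀ j x, s j x = 0 ∨ s j x = 1) (i : ι) (m : ℕ)
    (hinv : ∀ τ τ', throughput s m i τ = throughput s m i τ') (τ : ι → G) :
    throughput s m i τ
      = (𝔼 t, (s i t : ℚ)) * ∑ H ∈ (univ.erase i).powerset with #H ≤ m,
          (∏ j ∈ H, 𝔼 t, (s j t : ℚ)) * ∏ k ∈ univ.erase i \ H, (1 - 𝔼 t, (s k t : ℚ)) := by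
  rw [← expect_throughput hs, expect_congr rfl fun τ' _ => hinv τ' τ, Fintype.expect_const]

end Throughput

theorem R_eq_throughput {K L : ℕ} [NeZero L] (s : Fin K → ZMod L → ℕ) (γ : ℕ) (i : Fin K)
    (τ : Fin K → ZMod L) : R s γ i τ = throughput s (γ - 1) i τ := by
  rw [R, Rcount, throughput, nnratCast_dens, ZMod.card]

theorem duty_eq_expect {L : ℕ} [NeZero L] (s : ZMod L → ℕ) : duty s = 𝔼 t, (s t : ℚ) := by
  rw [duty, Fintype.expect_eq_sum_div_card, ZMod.card]

theorem stmt1 (K L γ : ℕ) (hK : 2 ≤ K) (hL : 1 ≤ L) [NeZero L]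
    (s : Fin K → ZMod L → ℕ) (hbin : ∀ i t, s i t = 0 ∨ s i t = 1)
    (hγ1 : 1 ≤ γ) (hγK : γ < K) (hTI : IsTI s γ) :
    ∀ (i : Fin K) (τ : Fin K → ZMod L),
      R s γ i τ
        = duty (s i) *
          ∑ H ∈ (Finset.univ.erase i).powerset.filter (fun H => H.card ≤ γ - 1),
            (∏ j ∈ H, duty (s j)) *
              ∏ k ∈ (Finset.univ.erase i) \ H, (1 - duty (s k)) := by
  intro i τ
  simpa only [R_eq_throughput, duty_eq_expect] using
    stmt1_general hbin i (γ - 1) (by simpa only [R_eq_throughput] using hTI i) τ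
end

section
/- Suppose the protocol sequence set s_1, …, s_K is TI with MPR capability γ, where 1 ≤ γ < K, and that R_i > 0 for every user i. Then the number of indices i such that s_i is the all-one sequence (s_i(t) = 1 for every t ∈ ZMod L) is at most γ − 1. -/
open Finset

/-!
In a slot where user `i` succeeds, at most `γ - 1` other users transmit. The all-one users other
than `i` transmit in every slot, so there are at most `γ - 1` of them. Taking for `i` a user that is
not all-one bounds all of them. If there is no such `i`, then `K - 1 ≤ γ - 1`,
contradicting `γ < K`.
-/

section AllOneUsers

variable {K L : ℕ} [NeZero L]

/-- The users whose sequence is the all-one sequence, that is, those who transmit in every slot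
whatever the shifts are. -/
def allOneUsers (s : Fin K → ZMod L → ℕ) : Finset (Fin K) :=
  {i | ∀ t : ZMod L, s i t = 1}

theorem card_allOneUsers_inter_le_sum (s : Fin K → ZMod L → ℕ) (A : Finset (Fin K))
    (x : Fin K → ZMod L) : #(allOneUsers s ∩ A) ≤ ∑ j ∈ A, s j (x j) :=
  calc
    #(allOneUsers s ∩ A) = ∑ j ∈ allOneUsers s ∩ A, s j (x j) := by
      rw [card_eq_sum_ones]
      refine sum_congr rfl fun j hj => ?_
      exact ((mem_filter.mp (mem_inter.mp hj).1).2 (x j)).symm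
    _ ≤ ∑ j ∈ A, s j (x j) := sum_le_sum_of_subset inter_subset_right

theorem R_pos_iff {s : Fin K → ZMod L → ℕ} {γ : ℕ} {i : Fin K} {τ : Fin K → ZMod L} :
    0 < R s γ i τ ↔
      ∃ t : ZMod L, s i (t + τ i) = 1 ∧ ∑ j ∈ univ.erase i, s j (t + τ j) ≤ γ - 1 := by
  have hL : (0 : ℚ) < L := Nat.cast_pos.mpr (NeZero.pos L)
  rw [R, div_pos_iff_of_pos_right hL, Nat.cast_pos, Rcount, card_pos, filter_nonempty_iff]
  simp only [mem_univ, true_and]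

theorem card_allOneUsers_erase_le_of_R_pos {s : Fin K → ZMod L → ℕ} {γ : ℕ} {i : Fin K}
    {τ : Fin K → ZMod L} (hR : 0 < R s γ i τ) : #((allOneUsers s).erase i) ≤ γ - 1 := by
  obtain ⟨t, -, ht⟩ := R_pos_iff.mp hR
  calc
    #((allOneUsers s).erase i) = #(allOneUsers s ∩ univ.erase i) := by
      rw [inter_erase, inter_univ]
    _ ≤ ∑ j ∈ univ.erase i, s j (t + τ j) :=
      card_allOneUsers_inter_le_sum s _ fun j => t + τ j
    _ ≤ γ - 1 := ht

theorem stmt2_general {γ : ℕ} (s : Fin K → ZMod L → ℕ) (hγ1 : 1 ≤ γ) (hγK : γ < K)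
    (hR : ∀ i : Fin K, ∃ τ : Fin K → ZMod L, 0 < R s γ i τ) :
    #(allOneUsers s) ≤ γ - 1 := by
  have herase (i : Fin K) : #((allOneUsers s).erase i) ≤ γ - 1 :=
    (hR i).elim fun _ => card_allOneUsers_erase_le_of_R_pos
  by_cases hall : allOneUsers s = univ
  · have hcard : #((allOneUsers s).erase ⟨γ, hγK⟩) = K - 1 := by
      rw [hall, card_erase_of_mem (mem_univ _), card_fin]
    have hK : K - 1 ≤ γ - 1 := hcard ▸ herase ⟨γ, hγK⟩
    omega
  · obtain ⟨i, hi⟩ : ∃ i, i ∉ allOneUsers s := by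
      simpa only [eq_univ_iff_forall, not_forall] using hall
    exact erase_eq_of_notMem hi ▸ herase i

end AllOneUsers

theorem stmt2 (K L γ : ℕ) (hK : 2 ≤ K) (hL : 1 ≤ L) [NeZero L]
    (s : Fin K → ZMod L → ℕ) (hbin : ∀ i t, s i t = 0 ∨ s i t = 1)
    (hγ1 : 1 ≤ γ) (hγK : γ < K) (hTI : IsTI s γ)
    (hR : ∀ (i : Fin K) (τ : Fin K → ZMod L), 0 < R s γ i τ) :
    (Finset.univ.filter (fun i : Fin K => ∀ t : ZMod L, s i t = 1)).card ≤ γ - 1 :=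
  stmt2_general s hγ1 hγK fun i => ⟨0, hR i 0⟩
end

section
/- Let γ be any integer with 1 ≤ γ < K. If the protocol sequence set s_1, …, s_K is TI with MPR capability γ and R_i > 0 for every user i, then the sequence set is pairwise SI, i.e., for every pair of distinct indices i < j the pairwise Hamming cross-correlation Σ_{t ∈ ZMod L} s_i(t+τ_i)·s_j(t+τ_j) is independent of the shifts τ_i, τ_j. -/
open Finset

/-! Fix `i ≠ j`, put their shifts at `a` and `b`, and sum the throughput of `i` over all shifts of
the remaining users. Seen from any slot in which `i` transmits, these shifts are uniformly
distributed, so whether `j` transmits too matters only when exactly `γ - 1` of the remaining users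
do. The sum is therefore affine in the cross-correlation of `i` and `j` at `(a, b)`, with slope
`-N`, where `N` counts the shifts for which exactly `γ - 1` of the remaining users transmit. And
`N ≠ 0`: all remaining users can be made active, at most `γ - 1` of them transmit in a slot where
`i` succeeds, and moving one user at a time changes the number of active users by at most one. -/

lemma exists_sum_eq_of_le_one {ι : Type*} {α : ι → Type*} {f : ∀ k, α k → ℕ}
    (hf : ∀ k x, f k x ≤ 1) (E : Finset ι) {v u : ∀ k, α k} {n : ℕ}
    (hv : ∑ k ∈ E, f k (v k) ≤ n) (hu : n ≤ ∑ k ∈ E, f k (u k)) :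
    ∃ σ : ∀ k, α k, ∑ k ∈ E, f k (σ k) = n := by
  classical
  induction E using Finset.induction_on generalizing n with
  | empty => exact ⟨v, by simp_all⟩
  | insert e E he ih =>
    rw [sum_insert he] at hv hu
    by_cases h : n - f e (v e) ≤ ∑ k ∈ E, f k (u k)
    · obtain ⟨σ, hσ⟩ := ih (Nat.le_sub_of_add_le' hv) h
      refine ⟨Function.update σ e (v e), ?_⟩
      have hE : ∑ k ∈ E, f k (Function.update σ e (v e) k) = ∑ k ∈ E, f k (σ k) :=
        sum_congr rfl fun k hk => by rw [Function.update_of_ne (ne_of_mem_of_not_mem hk he)]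
      rw [sum_insert he, Function.update_self, hE, hσ]
      omega
    · have hn : f e (u e) + ∑ k ∈ E, f k (u k) = n := by
        have := hf e (u e)
        omega
      exact ⟨u, by rw [sum_insert he, hn]⟩

lemma sum_erase_update_update {ι α M : Type*} [Fintype ι] [DecidableEq ι] [AddCommMonoid M]
    (f : ι → α → M) {i j : ι} (hij : i ≠ j) (a b : α) (σ : ι → α) :
    ∑ k ∈ univ.erase i, f k (Function.update (Function.update σ i a) j b k)
      = f j b + ∑ k ∈ {i, j}ᶜ, f k (σ k) := by
  have herase : (univ.erase i).erase j = ({i, j} : Finset ι)ᶜ := by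
    ext k
    simp [and_comm]
  rw [← add_sum_erase _ _ (mem_erase.2 ⟨hij.symm, mem_univ j⟩), herase, Function.update_self]
  congr 1
  refine sum_congr rfl fun k hk => ?_
  obtain ⟨hki, hkj⟩ : k ≠ i ∧ k ≠ j := by simpa using hk
  rw [Function.update_of_ne hkj, Function.update_of_ne hki]

lemma ite_lt_add_mul_ite_eq {x y : ℕ} (hx : x = 0 ∨ x = 1) (hy : y = 0 ∨ y = 1) (n γ : ℕ) :
    (if x = 1 ∧ y + n < γ then 1 else 0) + x * y * (if n + 1 = γ then 1 else 0)
      = x * (if n < γ then 1 else 0) := by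
  rcases hx with rfl | rfl <;> rcases hy with rfl | rfl <;> grind

section

variable {ι G : Type*} [Fintype ι] [DecidableEq ι] [AddGroup G] [Fintype G]

/-- The number of slots in which user `i` transmits and fewer than `γ` other users transmit, for
shifts in an arbitrary finite group `G`. Writing `< γ` instead of `≤ γ - 1` avoids truncated
subtraction. -/
def successCount (s : ι → G → ℕ) (γ : ℕ) (i : ι) (τ : ι → G) : ℕ :=
  #{t : G | s i (t + τ i) = 1 ∧ ∑ k ∈ univ.erase i, s k (t + τ k) < γ}

variable {s : ι → G → ℕ} {γ : ℕ} {i j : ι} {τ : ι → G}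

lemma exists_of_successCount_pos (h : 0 < successCount s γ i τ) :
    ∃ t, s i (t + τ i) = 1 ∧ ∑ k ∈ univ.erase i, s k (t + τ k) < γ := by
  simpa [successCount, card_pos, Finset.Nonempty] using h

lemma successCount_update_update (s : ι → G → ℕ) (γ : ℕ) (hij : i ≠ j) (a b : G) (σ : ι → G) :
    successCount s γ i (Function.update (Function.update σ i a) j b)
      = #{t | s i (t + a) = 1 ∧ s j (t + b) + ∑ k ∈ {i, j}ᶜ, s k (t + σ k) < γ} := by
  have hsum t := sum_erase_update_update (fun k x => s k (t + x)) hij a b σ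
  simp only [successCount, hsum, Function.update_of_ne hij, Function.update_self]

lemma sum_shift_eq_sum {M : Type*} [AddCommMonoid M] (F : (ι → G) → M) (t : G) :
    ∑ σ : ι → G, F (fun k => t + σ k) = ∑ σ, F σ :=
  Equiv.sum_comp (Equiv.addLeft fun _ : ι => t) F

lemma card_shifts_lt_add_mul_card_eq {x y : ℕ} (hx : x = 0 ∨ x = 1) (hy : y = 0 ∨ y = 1)
    (s : ι → G → ℕ) (E : Finset ι) (γ : ℕ) (t : G) :
    #{σ : ι → G | x = 1 ∧ y + ∑ k ∈ E, s k (t + σ k) < γ}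
        + x * y * #{σ : ι → G | ∑ k ∈ E, s k (σ k) + 1 = γ}
      = x * #{σ : ι → G | ∑ k ∈ E, s k (σ k) < γ} := by
  simp only [card_filter]
  rw [sum_shift_eq_sum (fun σ : ι → G => if x = 1 ∧ y + ∑ k ∈ E, s k (σ k) < γ then 1 else 0) t,
    mul_sum, mul_sum, ← sum_add_distrib]
  exact sum_congr rfl fun σ _ => ite_lt_add_mul_ite_eq hx hy _ γ

lemma sum_successCount_add (hbin : ∀ k t, s k t = 0 ∨ s k t = 1) (γ : ℕ) (hij : i ≠ j) (a b : G) :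
    ∑ σ : ι → G, successCount s γ i (Function.update (Function.update σ i a) j b)
        + (∑ t, s i (t + a) * s j (t + b))
          * #{σ : ι → G | ∑ k ∈ {i, j}ᶜ, s k (σ k) + 1 = γ}
      = (∑ t, s i t) * #{σ : ι → G | ∑ k ∈ {i, j}ᶜ, s k (σ k) < γ} := by
  have hswap : ∑ σ : ι → G, successCount s γ i (Function.update (Function.update σ i a) j b)
      = ∑ t, #{σ : ι → G |
          s i (t + a) = 1 ∧ s j (t + b) + ∑ k ∈ {i, j}ᶜ, s k (t + σ k) < γ} := by
    simp only [successCount_update_update s γ hij, card_filter]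
    exact sum_comm
  rw [hswap, ← Equiv.sum_comp (Equiv.addRight a) (s i), sum_mul, sum_mul, ← sum_add_distrib]
  exact sum_congr rfl fun t _ => card_shifts_lt_add_mul_card_eq (hbin i _) (hbin j _) s _ γ t

lemma card_critical_shifts_pos (hbin : ∀ k t, s k t = 0 ∨ s k t = 1) (hγ : γ < Fintype.card ι)
    (hij : i ≠ j) (hpos : 0 < successCount s γ i τ)
    (hactive : ∀ k, k ≠ i → k ≠ j → ∃ t, s k t = 1) :
    0 < #{σ : ι → G | ∑ k ∈ {i, j}ᶜ, s k (σ k) + 1 = γ} := by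
  obtain ⟨t, -, ht⟩ := exists_of_successCount_pos hpos
  have hquiet : ∑ k ∈ {i, j}ᶜ, s k (t + τ k) ≤ γ - 1 :=
    Nat.le_sub_one_of_lt <| (sum_le_sum_of_subset fun k => by simp +contextual).trans_lt ht
  have hactive' : ∀ k ∈ ({i, j} : Finset ι)ᶜ, ∃ t, s k t = 1 := fun k hk => by
    obtain ⟨hki, hkj⟩ : k ≠ i ∧ k ≠ j := by simpa using hk
    exact hactive k hki hkj
  choose! u hu using hactive'
  have hbusy : γ - 1 ≤ ∑ k ∈ {i, j}ᶜ, s k (u k) := by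
    rw [sum_congr rfl hu, ← card_eq_sum_ones, card_compl, card_pair hij]
    omega
  obtain ⟨σ, hσ⟩ := exists_sum_eq_of_le_one (fun k x => by grind) _ hquiet hbusy
  exact card_pos.2 ⟨σ, by simp only [mem_filter_univ]; omega⟩

theorem stmt3_general (hbin : ∀ k t, s k t = 0 ∨ s k t = 1) (hγ : γ < Fintype.card ι)
    (hij : i ≠ j) (hconst : ∀ τ τ', successCount s γ i τ = successCount s γ i τ')
    (hpos : 0 < successCount s γ i τ) (hactive : ∀ k, k ≠ i → k ≠ j → ∃ t, s k t = 1)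
    (a b a' b' : G) :
    ∑ t, s i (t + a) * s j (t + b) = ∑ t, s i (t + a') * s j (t + b') := by
  have havg : ∑ σ : ι → G, successCount s γ i (Function.update (Function.update σ i a) j b)
      = ∑ σ : ι → G, successCount s γ i (Function.update (Function.update σ i a') j b') :=
    sum_congr rfl fun _ _ => hconst _ _
  have hbal := (sum_successCount_add hbin γ hij a b).trans
    (sum_successCount_add hbin γ hij a' b').symm
  rw [havg] at hbal
  exact Nat.eq_of_mul_eq_mul_right (card_critical_shifts_pos hbin hγ hij hpos hactive)
    (Nat.add_left_cancel hbal)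

end

section

variable {K L γ : ℕ} [NeZero L] {s : Fin K → ZMod L → ℕ}

lemma R_eq_successCount_div (hγ : 1 ≤ γ) (i : Fin K) (τ : Fin K → ZMod L) :
    R s γ i τ = (successCount s γ i τ : ℚ) / L := by
  simp only [R, Rcount, successCount, Nat.le_sub_one_iff_lt hγ]

lemma successCount_pos_of_R_pos (hγ : 1 ≤ γ) {i : Fin K} {τ : Fin K → ZMod L}
    (h : 0 < R s γ i τ) : 0 < successCount s γ i τ := by
  rw [R_eq_successCount_div hγ] at h
  exact Nat.pos_of_ne_zero fun h0 => by simp [h0] at h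

lemma IsTI.successCount_eq (hγ : 1 ≤ γ) (h : IsTI s γ) (i : Fin K) (τ τ' : Fin K → ZMod L) :
    successCount s γ i τ = successCount s γ i τ' := by
  have hR := h i τ τ'
  rw [R_eq_successCount_div hγ, R_eq_successCount_div hγ,
    div_left_inj' (Nat.cast_ne_zero.2 (NeZero.ne L))] at hR
  exact Nat.cast_injective hR

end

theorem stmt3 (K L γ : ℕ) (hK : 2 ≤ K) (hL : 1 ≤ L) [NeZero L]
    (s : Fin K → ZMod L → ℕ) (hbin : ∀ i t, s i t = 0 ∨ s i t = 1)
    (hγ1 : 1 ≤ γ) (hγK : γ < K) (hTI : IsTI s γ)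
    (hR : ∀ (i : Fin K) (τ : Fin K → ZMod L), 0 < R s γ i τ) :
    ∀ i j : Fin K, i < j → ∀ τi τj τi' τj' : ZMod L,
      ∑ t : ZMod L, s i (t + τi) * s j (t + τj)
        = ∑ t : ZMod L, s i (t + τi') * s j (t + τj') := by
  intro i j hij
  have hpos k := successCount_pos_of_R_pos hγ1 (hR k 0)
  exact stmt3_general hbin (by simpa using hγK) hij.ne (hTI.successCount_eq hγ1 i) (hpos i)
    fun k _ _ =>
      let ⟨_, hk, _⟩ := exists_of_successCount_pos (hpos k)
      ⟨_, hk⟩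
end

section
/- For any K ≥ 1 and positive integers n_1,…,n_K and d_1,…,d_K with n_i ≤ d_i for every i, there exists a protocol sequence set s_1, …, s_K of common period L = d_1 · d_2 ⋯ d_K such that the set is SI and, for every i, the duty factor of s_i equals n_i/d_i. -/
open Finset

/-- Generalized Hamming cross-correlation of the sequences indexed by `A`. -/
def Hcorr' (K L : ℕ) (hL : L ≠ 0) (s : Fin K → ZMod L → ℕ)
    (A : Finset (Fin K)) (τ : Fin K → ZMod L) : ℕ :=
  haveI : NeZero L := ⟨hL⟩
  ∑ t : ZMod L, ∏ j ∈ A, s j (t + τ j)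

/-- The family `s` is shift-invariant (SI). -/
def IsSI' (K L : ℕ) (hL : L ≠ 0) (s : Fin K → ZMod L → ℕ) : Prop :=
  ∀ A : Finset (Fin K), A.Nonempty →
    ∀ τ τ' : Fin K → ZMod L, Hcorr' K L hL s A τ = Hcorr' K L hL s A τ'

/-- Duty factor of a single sequence. -/
def duty' (L : ℕ) (hL : L ≠ 0) (s : ZMod L → ℕ) : ℚ :=
  haveI : NeZero L := ⟨hL⟩
  (∑ t : ZMod L, (s t : ℚ)) / L

/-!
Write `t ∈ [0, d₁ ⋯ d_K)` in mixed radix with digits `tᵢ < dᵢ`, and let `sᵢ` be the indicator of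
`tᵢ < nᵢ`. Let `wᵢ = d₁ ⋯ dᵢ₋₁` be the place value of the `i`-th digit. Adding `wᵢ` rotates the
`i`-th digit and leaves all lower digits alone, so averaging over the shifts `0, wᵢ, …, (dᵢ - 1) wᵢ`
replaces `sᵢ` by the constant `nᵢ / dᵢ` while the earlier sequences do not change. Peeling off
the largest index of `A` repeatedly shows that each correlation over `A` equals
`L ∏_{i ∈ A} nᵢ / dᵢ`, whatever the shifts.
-/

section Averaging

variable {ι G R : Type*} [Fintype G] [CommSemiring R]

lemma mul_sum_mul_eq_of_periodic [AddGroup G] {f g : G → R} {c : G} {b : ℕ} {m : R}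
    (hf : Function.Periodic f c) (hg : ∀ t, ∑ k ∈ range b, g (t + k • c) = m) :
    b * ∑ t, f t * g t = m * ∑ t, f t := by
  have translate (k : ℕ) : ∑ t, f t * g t = ∑ t, f t * g (t + k • c) := by
    rw [← Equiv.sum_comp (Equiv.addRight (k • c))]
    exact sum_congr rfl fun t _ ↦ congrArg (· * _) (hf.nsmul k t)
  calc b * ∑ t, f t * g t
      = ∑ k ∈ range b, ∑ t, f t * g (t + k • c) := by
        simp only [← translate, sum_const, card_range, nsmul_eq_mul]
    _ = ∑ t, f t * ∑ k ∈ range b, g (t + k • c) := by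
        rw [sum_comm]
        simp only [mul_sum]
    _ = m * ∑ t, f t := by
        simp only [hg, ← sum_mul, mul_comm m]

lemma prod_mul_sum_prod_eq_of_periodic [LinearOrder ι] [AddCommGroup G] {s : ι → G → R}
    {c : ι → G} {b : ι → ℕ} {m : ι → R} (periodic : ∀ ⦃j i⦄, j < i → Function.Periodic (s j) (c i))
    (window : ∀ i t, ∑ k ∈ range (b i), s i (t + k • c i) = m i) (A : Finset ι) (τ : ι → G) :
    (∏ i ∈ A, (b i : R)) * ∑ t, ∏ i ∈ A, s i (t + τ i) = (∏ i ∈ A, m i) * Fintype.card G := by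
  induction A using Finset.induction_on_max with
  | empty => simp
  | insert a A lt_a ih =>
    have ha : a ∉ A := fun h ↦ (lt_a a h).false
    have hA : Function.Periodic (fun t ↦ ∏ i ∈ A, s i (t + τ i)) (c a) := fun t ↦
      prod_congr rfl fun i hi ↦ (periodic (lt_a i hi)).add_const (τ i) t
    have window_a (t : G) : ∑ k ∈ range (b a), s a (t + k • c a + τ a) = m a := by
      simpa only [add_right_comm t] using window a (t + τ a)
    calc (∏ i ∈ insert a A, (b i : R)) * ∑ t, ∏ i ∈ insert a A, s i (t + τ i)
        = (∏ i ∈ A, (b i : R)) * (b a * ∑ t, (∏ i ∈ A, s i (t + τ i)) * s a (t + τ a)) := by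
          simp only [prod_insert ha, mul_comm (s a _)]
          ring
      _ = m a * ((∏ i ∈ A, (b i : R)) * ∑ t, ∏ i ∈ A, s i (t + τ i)) := by
          rw [mul_sum_mul_eq_of_periodic hA window_a, mul_left_comm]
      _ = (∏ i ∈ insert a A, m i) * Fintype.card G := by
          rw [ih, prod_insert ha, mul_assoc]

end Averaging

lemma card_filter_Ico_mod_lt (a : ℕ) {b m : ℕ} (h : m ≤ b) :
    #{x ∈ Ico a (a + b) | x % b < m} = m := by
  have periodic : Function.Periodic (fun x ↦ x % b < m) b := (Nat.periodic_mod b).comp (· < m)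
  rw [Nat.filter_Ico_card_eq_of_periodic a b _ periodic,
    Nat.count_eq_card_filter_range]
  have filter_eq : {x ∈ range b | x % b < m} = range m := by
    ext x
    simp only [mem_filter, mem_range]
    constructor
    · rintro ⟨hxb, hx⟩
      rwa [Nat.mod_eq_of_lt hxb] at hx
    · intro hx
      have hxb : x < b := hx.trans_le h
      exact ⟨hxb, by rwa [Nat.mod_eq_of_lt hxb]⟩
  rw [filter_eq, card_range]

/-- The indicator sequence of period `L` of the residues whose base-`b` digit at place value `w`
is less than `m`. The digit is that of the representative in `[0, L)`; when `w * b ∣ L`, every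
natural number in the residue class has the same digit. -/
def digitSeq (L w b m : ℕ) (t : ZMod L) : ℕ :=
  if t.val / w % b < m then 1 else 0

section DigitSeq

variable {L w b m : ℕ}

lemma digitSeq_natCast (h : w * b ∣ L) (x : ℕ) :
    digitSeq L w b m x = if x / w % b < m then 1 else 0 := by
  rw [digitSeq, ZMod.val_natCast, ← Nat.mod_mul_right_div_self, Nat.mod_mod_of_dvd _ h,
    Nat.mod_mul_right_div_self]

lemma digitSeq_periodic [NeZero L] (h : w * b ∣ L) {p : ℕ} (hp : w * b ∣ p) :
    Function.Periodic (digitSeq L w b m) (p : ZMod L) := by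
  intro t
  obtain ⟨x, rfl⟩ := ZMod.natCast_zmod_surjective t
  obtain ⟨q, rfl⟩ := hp
  rw [← Nat.cast_add, digitSeq_natCast h, digitSeq_natCast h, ← Nat.mod_mul_right_div_self,
    Nat.add_mul_mod_self_left, Nat.mod_mul_right_div_self]

lemma sum_range_digitSeq_add_nsmul [NeZero L] (h : w * b ∣ L) (hm : m ≤ b) (t : ZMod L) :
    ∑ k ∈ range b, digitSeq L w b m (t + k • (w : ZMod L)) = m := by
  obtain ⟨x, rfl⟩ := ZMod.natCast_zmod_surjective t
  have hw : 0 < w := Nat.pos_of_ne_zero fun hw ↦ NeZero.ne L (by simpa [hw] using h)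
  calc ∑ k ∈ range b, digitSeq L w b m (x + k • (w : ZMod L))
      = ∑ k ∈ range b, if (x / w + k) % b < m then 1 else 0 := by
        refine sum_congr rfl fun k _ ↦ ?_
        rw [nsmul_eq_mul, ← Nat.cast_mul, ← Nat.cast_add, digitSeq_natCast h,
          Nat.add_mul_div_right _ _ hw]
    _ = #{y ∈ Ico (x / w) (x / w + b) | y % b < m} := by
        rw [card_filter, sum_Ico_eq_sum_range, Nat.add_sub_cancel_left]
    _ = m := card_filter_Ico_mod_lt _ hm

end DigitSeq

/-- The place value of the `i`-th digit in the mixed radix system with bases `d`, the digits being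
listed from the least significant one. -/
def placeValue {ι : Type*} [Preorder ι] [LocallyFiniteOrderBot ι] (d : ι → ℕ) (i : ι) : ℕ :=
  ∏ j ∈ Iio i, d j

section PlaceValue

variable {ι : Type*} [PartialOrder ι] [LocallyFiniteOrderBot ι] (d : ι → ℕ)

lemma placeValue_mul_self (i : ι) : placeValue d i * d i = ∏ j ∈ Iic i, d j :=
  prod_Iio_mul_eq_prod_Iic i

lemma placeValue_mul_dvd_prod [Fintype ι] (i : ι) : placeValue d i * d i ∣ ∏ j, d j := by
  rw [placeValue_mul_self]
  exact prod_dvd_prod_of_subset _ _ _ (subset_univ _)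

lemma placeValue_mul_dvd_placeValue {i j : ι} (h : j < i) :
    placeValue d j * d j ∣ placeValue d i := by
  rw [placeValue_mul_self]
  exact prod_dvd_prod_of_subset _ _ _ fun _ hk ↦ mem_Iio.mpr ((mem_Iic.mp hk).trans_lt h)

end PlaceValue

/-- The family of protocol sequences attached to the duty factors `n i / d i`: the `i`-th sequence
marks the residues whose `i`-th mixed radix digit is less than `n i`. -/
def mixedRadixSeq {ι : Type*} [Fintype ι] [Preorder ι] [LocallyFiniteOrderBot ι] (n d : ι → ℕ)
    (i : ι) : ZMod (∏ j, d j) → ℕ :=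
  digitSeq (∏ j, d j) (placeValue d i) (d i) (n i)

lemma duty'_eq_Hcorr'_singleton_div {K L : ℕ} (hL : L ≠ 0) (s : Fin K → ZMod L → ℕ) (i : Fin K) :
    duty' L hL (s i) = Hcorr' K L hL s {i} 0 / L := by
  simp only [duty', Hcorr', prod_singleton, Pi.zero_apply, add_zero, Nat.cast_sum]

section MixedRadixSeq

variable {K : ℕ} {n d : Fin K → ℕ}

lemma prod_mul_Hcorr'_mixedRadixSeq (hL : ∏ i, d i ≠ 0) (hnd : ∀ i, n i ≤ d i)
    (A : Finset (Fin K)) (τ : Fin K → ZMod (∏ i, d i)) :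
    (∏ i ∈ A, d i) * Hcorr' K (∏ i, d i) hL (mixedRadixSeq n d) A τ
      = (∏ i ∈ A, n i) * ∏ i, d i := by
  have : NeZero (∏ i, d i) := ⟨hL⟩
  have periodic ⦃j i : Fin K⦄ (h : j < i) :
      Function.Periodic (mixedRadixSeq n d j) (placeValue d i : ZMod (∏ i, d i)) :=
    digitSeq_periodic (placeValue_mul_dvd_prod d j) (placeValue_mul_dvd_placeValue d h)
  have window (i : Fin K) (t : ZMod (∏ i, d i)) :
      ∑ k ∈ range (d i), mixedRadixSeq n d i (t + k • (placeValue d i : ZMod (∏ i, d i))) = n i :=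
    sum_range_digitSeq_add_nsmul (placeValue_mul_dvd_prod d i) (hnd i) t
  simpa only [Hcorr', Nat.cast_id, ZMod.card] using
    prod_mul_sum_prod_eq_of_periodic periodic window A τ

lemma isSI'_mixedRadixSeq (hL : ∏ i, d i ≠ 0) (hnd : ∀ i, n i ≤ d i) :
    IsSI' K (∏ i, d i) hL (mixedRadixSeq n d) := by
  intro A _ τ τ'
  have hA : ∏ i ∈ A, d i ≠ 0 := prod_ne_zero_iff.mpr fun i _ ↦ prod_ne_zero_iff.mp hL i (mem_univ i)
  apply mul_left_cancel₀ hA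
  rw [prod_mul_Hcorr'_mixedRadixSeq hL hnd, prod_mul_Hcorr'_mixedRadixSeq hL hnd]

lemma duty'_mixedRadixSeq (hL : ∏ i, d i ≠ 0) (hnd : ∀ i, n i ≤ d i) (i : Fin K) :
    duty' (∏ i, d i) hL (mixedRadixSeq n d i) = (n i : ℚ) / d i := by
  have hdi : (d i : ℚ) ≠ 0 := Nat.cast_ne_zero.mpr (prod_ne_zero_iff.mp hL i (mem_univ i))
  have count : d i * Hcorr' K (∏ i, d i) hL (mixedRadixSeq n d) {i} 0 = n i * ∏ i, d i := by
    simpa only [prod_singleton] using prod_mul_Hcorr'_mixedRadixSeq hL hnd {i} 0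
  rw [duty'_eq_Hcorr'_singleton_div, div_eq_div_iff (Nat.cast_ne_zero.mpr hL) hdi, mul_comm]
  exact_mod_cast count

end MixedRadixSeq

theorem stmt7 (K : ℕ) (hK : 1 ≤ K) (n d : Fin K → ℕ)
    (hn : ∀ i, 0 < n i) (hd : ∀ i, 0 < d i) (hnd : ∀ i, n i ≤ d i) :
    ∃ s : Fin K → ZMod (∏ i, d i) → ℕ,
      (∀ i t, s i t = 0 ∨ s i t = 1) ∧
      IsSI' K (∏ i, d i) (Finset.prod_ne_zero_iff.mpr fun i _ => (hd i).ne') s ∧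
      ∀ i : Fin K,
        duty' (∏ i, d i) (Finset.prod_ne_zero_iff.mpr fun i _ => (hd i).ne') (s i)
          = (n i : ℚ) / (d i) := by
  have hL : ∏ i, d i ≠ 0 := prod_ne_zero_iff.mpr fun i _ ↦ (hd i).ne'
  exact ⟨mixedRadixSeq n d, fun _ _ ↦ (ite_eq_or_eq _ _ _).symm, isSI'_mixedRadixSeq hL hnd,
    duty'_mixedRadixSeq hL hnd⟩
end

section
/- Let γ be a positive integer with 1 ≤ γ < K and let S = {s_1,…,s_K} be a protocol sequence set. If S is TI with MPR capability γ and for every subset T ⊆ {1,…,K} with |T| = K−1 the subfamily (s_j)_{j∈T} is SI (i.e., H((τ_j)_{j∈A}; A) is independent of the shifts for every nonempty A ⊆ T), then S itself is SI. -/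
open Finset

/-!
Newton's forward difference formula for the indicator `[n ≤ γ - 1]` writes `[∑ j ∈ U, x j ≤ γ - 1]`,
for binary `x`, as a combination of the monomials `∏ j ∈ A, x j` with `A ⊆ U`. Summing over one
period, the throughput of user `i` becomes a combination of the correlations of the sets containing
`i`. If two shifts give the same throughput and the same correlations of all proper subsets, they
give the same correlation of the full set, because its coefficient is `± (K - 2).choose (γ - 1)`,
which is nonzero for `1 ≤ γ < K`.
-/

theorem apply_sum_eq_sum_powerset_prod_smul_fwdDiff {ι G : Type*} [AddCommGroup G]
    (f : ℕ → G) {x : ι → ℕ} {U : Finset ι} (hx : ∀ j ∈ U, x j = 0 ∨ x j = 1) :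
    f (∑ j ∈ U, x j) = ∑ A ∈ U.powerset, (∏ j ∈ A, x j) • (fwdDiff 1)^[#A] f 0 := by
  classical
  induction U using Finset.induction_on generalizing f with
  | empty => simp
  | insert a U ha ih =>
    rw [forall_mem_insert] at hx
    have shift (n : ℕ) : f (x a + n) = f n + x a • fwdDiff 1 f n := by
      rcases hx.1 with h | h <;> simp [h, fwdDiff, add_comm 1 n]
    rw [sum_insert ha, shift, ih f hx.2, ih (fwdDiff 1 f) hx.2, sum_powerset_insert ha, smul_sum]
    congr 1
    refine sum_congr rfl fun A hA => ?_
    have haA : a ∉ A := fun h => ha (mem_powerset.1 hA h)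
    rw [prod_insert haA, card_insert_of_notMem haA, mul_smul, Function.iterate_succ_apply]

theorem fwdDiff_indicator_Iic (m : ℕ) :
    fwdDiff 1 ((Set.Iic m).indicator (1 : ℕ → ℤ)) = -Pi.single m 1 := by
  ext n
  simp only [fwdDiff, Set.indicator_apply, Set.mem_Iic, Pi.one_apply, Pi.neg_apply,
    Pi.single_apply]
  split_ifs <;> omega

theorem fwdDiff_iter_succ_indicator_Iic (m n : ℕ) :
    (fwdDiff 1)^[n + 1] ((Set.Iic m).indicator (1 : ℕ → ℤ)) 0 = -((-1) ^ (n - m) * n.choose m) := by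
  rw [Function.iterate_succ_apply, fwdDiff_indicator_Iic, fwdDiff_iter_eq_sum_shift]
  simp +contextual [Pi.single_apply, Nat.choose_eq_zero_of_lt]

theorem fwdDiff_iter_indicator_Iic_ne_zero {m n : ℕ} (h : m < n) :
    (fwdDiff 1)^[n] ((Set.Iic m).indicator (1 : ℕ → ℤ)) 0 ≠ 0 := by
  obtain ⟨n, rfl⟩ := Nat.exists_eq_succ_of_ne_zero (Nat.ne_zero_of_lt h)
  have hchoose : n.choose m ≠ 0 := (Nat.choose_pos (Nat.le_of_lt_succ h)).ne'
  rw [fwdDiff_iter_succ_indicator_Iic]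
  simp [hchoose]

section Protocol

variable {K L : ℕ} [NeZero L] {s : Fin K → ZMod L → ℕ} {γ : ℕ} {i : Fin K} {τ τ' : Fin K → ZMod L}

theorem sum_smul_apply_sum_eq_sum_powerset_hcorr_smul {G : Type*} [AddCommGroup G]
    (f : ℕ → G) {U : Finset (Fin K)} (hU : ∀ j ∈ U, ∀ t, s j t = 0 ∨ s j t = 1) (hi : i ∉ U)
    (τ : Fin K → ZMod L) :
    ∑ t : ZMod L, s i (t + τ i) • f (∑ j ∈ U, s j (t + τ j)) =
      ∑ A ∈ U.powerset, Hcorr s (insert i A) τ • (fwdDiff 1)^[#A] f 0 := by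
  have expand (t : ZMod L) : s i (t + τ i) • f (∑ j ∈ U, s j (t + τ j)) =
      ∑ A ∈ U.powerset, (∏ j ∈ insert i A, s j (t + τ j)) • (fwdDiff 1)^[#A] f 0 := by
    rw [apply_sum_eq_sum_powerset_prod_smul_fwdDiff f fun j hj => hU j hj _, smul_sum]
    refine sum_congr rfl fun A hA => ?_
    rw [prod_insert fun h => hi (mem_powerset.1 hA h), mul_smul]
  simp only [expand, Hcorr, sum_smul]
  exact sum_comm

theorem natCast_rcount_eq_sum_smul_indicator (hbin : ∀ t, s i t = 0 ∨ s i t = 1) (γ : ℕ)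
    (τ : Fin K → ZMod L) :
    (Rcount s γ i τ : ℤ) = ∑ t : ZMod L, s i (t + τ i) •
      (Set.Iic (γ - 1)).indicator (1 : ℕ → ℤ) (∑ j ∈ univ.erase i, s j (t + τ j)) := by
  rw [Rcount, natCast_card_filter]
  refine sum_congr rfl fun t _ => ?_
  rcases hbin (t + τ i) with h | h <;> simp [h, Set.indicator_apply]

theorem R_eq_R_iff_rcount_eq : R s γ i τ = R s γ i τ' ↔ Rcount s γ i τ = Rcount s γ i τ' := by
  rw [R, R, div_left_inj' (Nat.cast_ne_zero.2 (NeZero.ne L)), Nat.cast_inj]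

theorem hcorr_univ_eq_of_rcount_eq (hbin : ∀ i t, s i t = 0 ∨ s i t = 1) (hγ1 : 1 ≤ γ)
    (hγK : γ < K) (hR : Rcount s γ i τ = Rcount s γ i τ')
    (hproper : ∀ A : Finset (Fin K), i ∈ A → A ≠ univ → Hcorr s A τ = Hcorr s A τ') :
    Hcorr s univ τ = Hcorr s univ τ' := by
  set f : ℕ → ℤ := (Set.Iic (γ - 1)).indicator 1
  set U : Finset (Fin K) := univ.erase i
  have hiU : i ∉ U := notMem_erase i univ
  have expand (σ : Fin K → ZMod L) :
      (Rcount s γ i σ : ℤ) = ∑ A ∈ U.powerset, Hcorr s (insert i A) σ • (fwdDiff 1)^[#A] f 0 := by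
    rw [natCast_rcount_eq_sum_smul_indicator (hbin i),
      sum_smul_apply_sum_eq_sum_powerset_hcorr_smul f (fun j _ => hbin j) hiU]
  have rest : ∀ A ∈ U.powerset.erase U, Hcorr s (insert i A) τ • (fwdDiff 1)^[#A] f 0 =
      Hcorr s (insert i A) τ' • (fwdDiff 1)^[#A] f 0 := by
    intro A hA
    obtain ⟨hAU, hsub⟩ := mem_erase.1 hA
    have hiA : i ∉ A := fun h => hiU (mem_powerset.1 hsub h)
    rw [hproper _ (mem_insert_self i A) fun h => hAU (by rw [← erase_insert hiA, h])]
  have leading : (fwdDiff 1)^[#U] f 0 ≠ 0 := by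
    refine fwdDiff_iter_indicator_Iic_ne_zero ?_
    rw [card_erase_of_mem (mem_univ i), card_fin]
    omega
  have top : Hcorr s (insert i U) τ • (fwdDiff 1)^[#U] f 0 =
      Hcorr s (insert i U) τ' • (fwdDiff 1)^[#U] f 0 := by
    have h := (expand τ).symm.trans ((congrArg Nat.cast hR).trans (expand τ'))
    rwa [← add_sum_erase _ _ (mem_powerset_self U), ← add_sum_erase _ _ (mem_powerset_self U),
      sum_congr rfl rest, add_left_inj] at h
  rw [insert_erase (mem_univ i), nsmul_eq_mul, nsmul_eq_mul] at top
  exact Nat.cast_injective (mul_right_cancel₀ leading top)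

theorem stmt8_general (hbin : ∀ i t, s i t = 0 ∨ s i t = 1) (hγ1 : 1 ≤ γ) (hγK : γ < K)
    (hR : R s γ i τ = R s γ i τ')
    (hsub : ∀ T : Finset (Fin K), T.card = K - 1 →
      ∀ A ⊆ T, A.Nonempty → Hcorr s A τ = Hcorr s A τ')
    (A : Finset (Fin K)) (hA : A.Nonempty) : Hcorr s A τ = Hcorr s A τ' := by
  have hproper (B : Finset (Fin K)) (hB : B.Nonempty) (hne : B ≠ univ) :
      Hcorr s B τ = Hcorr s B τ' := by
    have hcard : #B < K := by simpa using (card_lt_iff_ne_univ B).2 hne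
    obtain ⟨T, hBT, hT⟩ := exists_superset_card_eq (n := K - 1) (by omega : #B ≤ K - 1) (by simp)
    exact hsub T hT B hBT hB
  obtain rfl | hne := eq_or_ne A univ
  · exact hcorr_univ_eq_of_rcount_eq hbin hγ1 hγK (R_eq_R_iff_rcount_eq.1 hR)
      fun B hi => hproper B ⟨i, hi⟩
  · exact hproper A hA hne

end Protocol

theorem stmt8 (K L γ : ℕ) (hK : 2 ≤ K) (hL : 1 ≤ L) [NeZero L]
    (s : Fin K → ZMod L → ℕ) (hbin : ∀ i t, s i t = 0 ∨ s i t = 1)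
    (hγ1 : 1 ≤ γ) (hγK : γ < K) (hTI : IsTI s γ)
    (hsub : ∀ T : Finset (Fin K), T.card = K - 1 →
      ∀ A ⊆ T, A.Nonempty →
        ∀ τ τ' : Fin K → ZMod L, Hcorr s A τ = Hcorr s A τ') :
    IsSI s := by
  intro A hA τ τ'
  exact stmt8_general hbin hγ1 hγK (hTI ⟨0, by omega⟩ τ τ')
    (fun T hT B hBT hB => hsub T hT B hBT hB τ τ') A hA
end

section
/- Let S = {s_1,…,s_K} (K ≥ 2) be a protocol sequence set. If S is TI with MPR capability γ = 1 and R_i > 0 for every user i, then S is SI. -/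
open Finset

/-!
For `γ = 1`, a success of user `i` in a slot is the event `s i * ∏ j ≠ i, (1 - s j) = 1`, so
throughput invariance says that the full cross-correlation of the family `s i, 1 - s j (j ≠ i)`
does not depend on the shifts. Averaging over the shift of one user `j` splits off the factor
`∑ t, (1 - s j t)`; when it is nonzero it can be cancelled, and the cross-correlation with `j` left
out is again invariant. Inclusion-exclusion then recovers the cross-correlations of `s` itself over
all sets of users containing `i`. The factor vanishes only if `s j` is identically `1`; one such
sequence is harmless, since it can be inserted into any product for free and so be taken as `s i`.
-/

section CrossCorrelation

variable {ι G S : Type*}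

/-- The family `f` with every member except the `i`-th replaced by its complement `1 - f j`. For
binary sequences the product of this family is the indicator of user `i` transmitting alone. -/
def complementExcept [DecidableEq ι] [Ring S] (f : ι → G → S) (i : ι) : ι → G → S :=
  Function.update (1 - f) i (f i)

theorem complementExcept_self [DecidableEq ι] [Ring S] (f : ι → G → S) (i : ι) :
    complementExcept f i i = f i :=
  Function.update_self ..

theorem complementExcept_of_ne [DecidableEq ι] [Ring S] (f : ι → G → S) {i j : ι} (hj : j ≠ i)
    (t : G) : complementExcept f i j t = 1 - f j t := by
  rw [complementExcept, Function.update_of_ne hj, Pi.sub_apply, Pi.sub_apply, Pi.one_apply,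
    Pi.one_apply]

variable [Fintype G]

/-- The cross-correlation over `A` at the shifts `τ` of a family of functions with values in a
commutative semiring. It extends `Hcorr`, so that complements `1 - f j` and averaging over a shift
can be handled in a ring. -/
def crossCorr [Add G] [CommSemiring S] (f : ι → G → S) (A : Finset ι) (τ : ι → G) : S :=
  ∑ t, ∏ j ∈ A, f j (t + τ j)

/-- Shift invariance of a family at a single index set `A`; `IsSI` asks for it at every nonempty
`A`. -/
def IsShiftInvariantOn [Add G] [CommSemiring S] (f : ι → G → S) (A : Finset ι) : Prop :=
  ∀ τ τ' : ι → G, crossCorr f A τ = crossCorr f A τ'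

theorem natCast_crossCorr [Add G] [CommSemiring S] (f : ι → G → ℕ) (A : Finset ι) (τ : ι → G) :
    ((crossCorr f A τ : ℕ) : S) = crossCorr (fun j t ↦ (f j t : S)) A τ := by
  simp only [crossCorr, Nat.cast_sum, Nat.cast_prod]

theorem isShiftInvariantOn_natCast_iff [Add G] [CommSemiring S] [CharZero S] {f : ι → G → ℕ}
    {A : Finset ι} :
    IsShiftInvariantOn (fun j t ↦ (f j t : S)) A ↔ IsShiftInvariantOn f A := by
  simp only [IsShiftInvariantOn, ← natCast_crossCorr, Nat.cast_inj]

theorem crossCorr_insert_of_eq_one [DecidableEq ι] [Add G] [CommSemiring S] {f : ι → G → S} {i : ι}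
    (hi : ∀ t, f i t = 1) (A : Finset ι) (τ : ι → G) :
    crossCorr f (insert i A) τ = crossCorr f A τ :=
  sum_congr rfl fun t _ ↦ prod_insert_of_eq_one_if_notMem fun _ ↦ hi (t + τ i)

theorem sum_crossCorr_update [DecidableEq ι] [AddGroup G] [CommSemiring S] (f : ι → G → S)
    {A : Finset ι} {j : ι} (hj : j ∉ A) (τ : ι → G) :
    ∑ x, crossCorr f (insert j A) (Function.update τ j x) = (∑ x, f j x) * crossCorr f A τ := by
  have prod_update (t x : G) : ∏ k ∈ insert j A, f k (t + Function.update τ j x k) =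
      f j (t + x) * ∏ k ∈ A, f k (t + τ k) := by
    rw [prod_insert hj, Function.update_self]
    congr 1
    exact prod_congr rfl fun k hk ↦ by rw [Function.update_of_ne (ne_of_mem_of_not_mem hk hj)]
  have sum_translate (t : G) : ∑ x, f j (t + x) = ∑ x, f j x :=
    Equiv.sum_comp (Equiv.addLeft t) (f j)
  simp only [crossCorr, prod_update]
  rw [sum_comm]
  simp only [← sum_mul, sum_translate, ← mul_sum]

section Cancel

variable [AddGroup G] [CommSemiring S] [IsCancelMulZero S] {f : ι → G → S} {A B : Finset ι}

theorem IsShiftInvariantOn.of_insert [DecidableEq ι] {j : ι} (h : IsShiftInvariantOn f (insert j A))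
    (hj : j ∉ A) (hsum : ∑ x, f j x ≠ 0) : IsShiftInvariantOn f A := fun τ τ' ↦ by
  apply mul_left_cancel₀ hsum
  rw [← sum_crossCorr_update f hj, ← sum_crossCorr_update f hj]
  exact sum_congr rfl fun x _ ↦ h _ _

theorem IsShiftInvariantOn.of_union [DecidableEq ι] (h : IsShiftInvariantOn f (B ∪ A))
    (hsum : ∀ j ∈ B, j ∉ A → ∑ x, f j x ≠ 0) : IsShiftInvariantOn f A := by
  induction B using Finset.induction_on with
  | empty => rwa [empty_union] at h
  | insert j B _ ih =>
    refine ih ?_ fun k hk ↦ hsum k (mem_insert_of_mem hk)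
    rw [insert_union] at h
    by_cases hj : j ∈ B ∪ A
    · rwa [insert_eq_of_mem hj] at h
    · exact h.of_insert hj (hsum j (mem_insert_self j B) fun hA ↦ hj (mem_union_right B hA))

theorem IsShiftInvariantOn.mono (h : IsShiftInvariantOn f B) (hAB : A ⊆ B)
    (hsum : ∀ j ∈ B, j ∉ A → ∑ x, f j x ≠ 0) : IsShiftInvariantOn f A := by
  classical
  rw [← sdiff_union_of_subset hAB] at h
  exact h.of_union fun j hj ↦ hsum j (mem_sdiff.mp hj).1

end Cancel

section Complement

variable [DecidableEq ι] [Add G] [CommRing S] {f : ι → G → S} {A : Finset ι} {i : ι}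

theorem crossCorr_insert_eq_sum_powerset (hi : i ∉ A) (τ : ι → G) :
    crossCorr f (insert i A) τ =
      ∑ B ∈ A.powerset, (-1) ^ #B * crossCorr (complementExcept f i) (insert i B) τ := by
  simp only [crossCorr, mul_sum]
  rw [sum_comm]
  refine sum_congr rfl fun t _ ↦ ?_
  have eq_one_sub : ∀ j ∈ A, f j (t + τ j) = 1 - complementExcept f i j (t + τ j) := fun j hj ↦ by
    rw [complementExcept_of_ne f (ne_of_mem_of_not_mem hj hi), sub_sub_cancel]
  rw [prod_insert hi, prod_congr rfl eq_one_sub, prod_sub, mul_sum]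
  refine sum_congr rfl fun B hB ↦ ?_
  rw [prod_const_one, mul_one, prod_insert fun h ↦ hi (mem_powerset.mp hB h), complementExcept_self,
    mul_left_comm]

theorem IsShiftInvariantOn.of_complementExcept (hi : i ∈ A)
    (h : ∀ B, i ∈ B → IsShiftInvariantOn (complementExcept f i) B) :
    IsShiftInvariantOn f A := fun τ τ' ↦ by
  rw [← insert_erase hi, crossCorr_insert_eq_sum_powerset (notMem_erase i A),
    crossCorr_insert_eq_sum_powerset (notMem_erase i A)]
  exact sum_congr rfl fun B _ ↦ by rw [h (insert i B) (mem_insert_self i B) τ τ']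

end Complement

end CrossCorrelation

section Throughput

variable {K L : ℕ} [NeZero L] {s : Fin K → ZMod L → ℕ} {i : Fin K}

theorem IsTI.rcount_eq {γ : ℕ} (hTI : IsTI s γ) (i : Fin K) (τ τ' : Fin K → ZMod L) :
    Rcount s γ i τ = Rcount s γ i τ' := by
  have hL : (L : ℚ) ≠ 0 := Nat.cast_ne_zero.mpr (NeZero.ne L)
  exact Nat.cast_injective ((div_left_inj' hL).mp (hTI i τ τ'))

theorem crossCorr_complementExcept_univ (hbin : ∀ i t, s i t = 0 ∨ s i t = 1) (i : Fin K)
    (τ : Fin K → ZMod L) :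
    crossCorr (complementExcept (fun j t ↦ (s j t : ℤ)) i) univ τ = Rcount s 1 i τ := by
  have ite_one (t : ZMod L) : (s i t : ℤ) = if s i t = 1 then 1 else 0 := by
    rcases hbin i t with h | h <;> simp [h]
  have ite_zero (j : Fin K) (t : ZMod L) : (1 - s j t : ℤ) = if s j t = 0 then 1 else 0 := by
    rcases hbin j t with h | h <;> simp [h]
  rw [Rcount, natCast_card_filter, crossCorr]
  refine sum_congr rfl fun t _ ↦ ?_
  have prod_others : ∏ j ∈ univ.erase i, complementExcept (fun j t ↦ (s j t : ℤ)) i j (t + τ j) =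
      if ∑ j ∈ univ.erase i, s j (t + τ j) ≤ 1 - 1 then 1 else 0 := by
    rw [prod_congr rfl fun j hj ↦
      (complementExcept_of_ne _ (ne_of_mem_erase hj) _).trans (ite_zero j _)]
    simp only [prod_ite_zero, prod_const_one, Nat.sub_self, Nat.le_zero, sum_eq_zero_iff]
  rw [← mul_prod_erase univ _ (mem_univ i), prod_others, complementExcept_self, ite_one,
    ite_zero_mul_ite_zero, one_mul]

theorem sum_one_sub_ne_zero {α : Type*} [Fintype α] {u : α → ℕ} (hu : ∀ t, u t ≤ 1)
    (h : ¬ ∀ t, u t = 1) : ∑ t, (1 - u t : ℤ) ≠ 0 := by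
  contrapose! h
  have nonneg (t : α) : (0 : ℤ) ≤ 1 - u t := sub_nonneg.mpr (mod_cast hu t)
  intro t
  have hzero := (sum_eq_zero_iff_of_nonneg fun t _ ↦ nonneg t).mp h t (mem_univ t)
  exact_mod_cast (sub_eq_zero.mp hzero).symm

theorem IsTI.isShiftInvariantOn (hTI : IsTI s 1) (hbin : ∀ i t, s i t = 0 ∨ s i t = 1)
    (hothers : ∀ j ≠ i, ¬ ∀ t, s j t = 1) {A : Finset (Fin K)} (hi : i ∈ A) :
    IsShiftInvariantOn s A := by
  have alone : IsShiftInvariantOn (complementExcept (fun j t ↦ (s j t : ℤ)) i) univ :=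
    fun τ τ' ↦ by
      rw [crossCorr_complementExcept_univ hbin, crossCorr_complementExcept_univ hbin,
        hTI.rcount_eq i τ τ']
  refine isShiftInvariantOn_natCast_iff.mp <| .of_complementExcept hi fun B hB ↦
    alone.mono (subset_univ B) fun j _ hj ↦ ?_
  have hji : j ≠ i := (ne_of_mem_of_not_mem hB hj).symm
  simp only [complementExcept_of_ne _ hji]
  exact sum_one_sub_ne_zero (fun t ↦ by rcases hbin j t with h | h <;> simp [h]) (hothers j hji)

theorem exists_eq_zero_of_R_pos {τ : Fin K → ZMod L} (h : 0 < R s 1 i τ) {j : Fin K}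
    (hj : j ≠ i) : ∃ t, s j t = 0 := by
  have hcount : Rcount s 1 i τ ≠ 0 := fun h0 ↦ by simp [R, h0] at h
  obtain ⟨t, ht⟩ := card_ne_zero.mp hcount
  have hsum : ∑ k ∈ univ.erase i, s k (t + τ k) = 0 := Nat.le_zero.mp (mem_filter.mp ht).2.2
  exact ⟨t + τ j, sum_eq_zero_iff.mp hsum j (mem_erase_of_ne_of_mem hj (mem_univ j))⟩

theorem subsingleton_setOf_eq_one_of_R_pos {τ : Fin K → ZMod L} (h : 0 < R s 1 i τ) :
    {j | ∀ t, s j t = 1}.Subsingleton := by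
  refine Set.subsingleton_of_forall_eq i fun j hone ↦ by_contra fun hj ↦ ?_
  obtain ⟨t, hzero⟩ := exists_eq_zero_of_R_pos h hj
  exact one_ne_zero ((hone t).symm.trans hzero)

theorem stmt14_general (hbin : ∀ i t, s i t = 0 ∨ s i t = 1) (hTI : IsTI s 1)
    (hone : {j | ∀ t, s j t = 1}.Subsingleton) : IsSI s := by
  intro A hA
  change IsShiftInvariantOn s A
  by_cases h : ∃ i, ∀ t, s i t = 1
  · obtain ⟨i, hi⟩ := h
    have hothers : ∀ j ≠ i, ¬ ∀ t, s j t = 1 := fun j hji hj ↦ hji (hone hj hi)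
    have hinsert := hTI.isShiftInvariantOn hbin hothers (mem_insert_self i A)
    simpa only [IsShiftInvariantOn, crossCorr_insert_of_eq_one hi] using hinsert
  · obtain ⟨i, hi⟩ := hA
    exact hTI.isShiftInvariantOn hbin (fun j _ hj ↦ h ⟨j, hj⟩) hi

end Throughput

theorem stmt14 (K L : ℕ) (hK : 2 ≤ K) (hL : 1 ≤ L) [NeZero L]
    (s : Fin K → ZMod L → ℕ) (hbin : ∀ i t, s i t = 0 ∨ s i t = 1)
    (hTI : IsTI s 1)
    (hR : ∀ (i : Fin K) (τ : Fin K → ZMod L), 0 < R s 1 i τ) :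
    IsSI s :=
  stmt14_general hbin hTI (subsingleton_setOf_eq_one_of_R_pos (hR ⟨0, by lia⟩ 0))
end
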